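/- Reduction of ℓ-reflexive polygons to reflexive polygons: Let ℓ > 1 be an integer and Q ⊆ ℝ² an ℓ-reflexive polygon with respect to ℤ². Then there exist an integer k with 1 ≤ k ≤ ℓ−1 and gcd(k,ℓ) = 1, a reflexive polygon P ⊆ ℝ² with respect to ℤ², and U ∈ GL₂(ℤ), such that Q is the image of P under the composite linear map U ∘ A_{ℓ,k}, where A_{ℓ,k} : ℝ² → ℝ² is the linear map A_{ℓ,k}(x₁,x₂) = (ℓ·x₁, k·x₁ + x₂) (the matrix with rows (ℓ,0) and (k,1)). -/

import Mathlib

/-!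
All vertices of an `ℓ`-reflexive polygon `Q` lie in one sublattice
`Λ = {w ∈ ℤ² : ℓ ∣ det(v, w)}` of index `ℓ`, where `v` is any fixed vertex, and `Q` is reflexive
with respect to `Λ`.

If two vertices `u, w` lie on a common edge `⟨η, ·⟩ = -ℓ`, then `w - u` is an integer multiple of
the primitive vector orthogonal to `η`, hence `ℓ ∣ det(u, w)` (`dvd_det_of_level`). On primitive
vectors the relation `ℓ ∣ det(u, w)` is transitive (`dvd_det_trans`). To reach every vertex from
`v`, colour a functional `η ≠ 0` according to whether it is minimised on `Q` at a vertex related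
to `v`, or at a vertex not related to `v`. Both colour classes are closed and they cover the
connected set `ℝ² \ {0}`; a functional of both colours would be minimised at two distinct
unrelated vertices, which then span an edge. Since every vertex minimises some nonzero functional,
all vertices are related to `v` (`vertices_related`).

Completing `v` to a lattice basis gives `U ∈ GL₂(ℤ)` with second column `v`, and then
`Λ = U(ℓℤ × ℤ) = U A_{ℓ,k} ℤ²` for every `k`; the value `k = 1` is used. The polygon
`P = (U A_{ℓ,1})⁻¹ Q` has primitive lattice vertices, and the transposed map sends the primitive
normal of an edge of `Q` to `ℓ` times the normal of the corresponding edge of `P`.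
-/

open Set

noncomputable section

abbrev V : Type := ℝ × ℝ

/-- Standard inner product on ℝ². -/
def dotV (x y : V) : ℝ := x.1 * y.1 + x.2 * y.2

/-- The standard lattice ℤ² viewed inside ℝ². -/
def latticePts : Set V := {x : V | ∃ p : ℤ × ℤ, x = ((p.1 : ℝ), (p.2 : ℝ))}

/-- A polygon: convex hull of a finite set of points that affinely spans ℝ². -/
def IsPolygon (Q : Set V) : Prop :=
  ∃ A : Finset V, Q = convexHull ℝ (A : Set V) ∧ affineSpan ℝ (A : Set V) = ⊤

/-- An edge of `Q`: a one-dimensional face, i.e. the argmin set of some nonzero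
linear functional, containing more than one point. -/
def IsEdge (Q F : Set V) : Prop :=
  (∃ η : V, η ≠ 0 ∧ F = {y ∈ Q | ∀ z ∈ Q, dotV η y ≤ dotV η z}) ∧
    ∃ y₁ ∈ F, ∃ y₂ ∈ F, y₁ ≠ y₂

/-- A primitive lattice point: the only lattice points on the segment `conv {0, v}`
are `0` and `v`. -/
def IsPrimitive (v : V) : Prop :=
  v ∈ latticePts ∧ v ≠ 0 ∧ segment ℝ (0 : V) v ∩ latticePts = {(0 : V), v}

/-- An ℓ-reflexive polygon with respect to ℤ². -/
structure IsLReflexive (ℓ : ℕ) (Q : Set V) : Prop where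
  polygon : IsPolygon Q
  vertices_primitive : ∀ v ∈ Set.extremePoints ℝ Q, IsPrimitive v
  zero_mem_interior : (0 : V) ∈ interior Q
  edge_cond : ∀ F, IsEdge Q F →
    ∃ η : V, IsPrimitive η ∧ F ⊆ {y : V | dotV η y = -(ℓ : ℝ)}

/-- The polar polygon `Q° = {x | ⟨x,y⟩ ≥ -1 for all y ∈ Q}`. -/
def polarPolygon (Q : Set V) : Set V := {x : V | ∀ y ∈ Q, -1 ≤ dotV x y}

/-- The dual of an ℓ-reflexive polygon: `Q* = ℓ·Q°`. -/
def dualPolygon (ℓ : ℕ) (Q : Set V) : Set V := (fun x : V => (ℓ : ℝ) • x) '' polarPolygon Q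

/-- The linear map on ℝ² given by an integer 2×2 matrix. -/
def mapGL (A : Matrix (Fin 2) (Fin 2) ℤ) (x : V) : V :=
  ((A 0 0 : ℝ) * x.1 + (A 0 1 : ℝ) * x.2, (A 1 0 : ℝ) * x.1 + (A 1 1 : ℝ) * x.2)

/-- The linear map `A_{ℓ,k}(x₁,x₂) = (ℓ·x₁, k·x₁ + x₂)`. -/
def mapA (ℓ k : ℕ) (x : V) : V := ((ℓ : ℝ) * x.1, (k : ℝ) * x.1 + x.2)

/-! ### Integer arithmetic -/

lemma isPrimitive_iff (v : V) :
    IsPrimitive v ↔ ∃ a b : ℤ, v = ((a : ℝ), (b : ℝ)) ∧ IsCoprime a b := by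
  constructor
  · rintro ⟨⟨⟨a, b⟩, hv⟩, h0, hs⟩
    refine ⟨a, b, hv, ?_⟩
    simp only at hv
    rw [Int.isCoprime_iff_gcd_eq_one]
    have hgpos : 0 < Int.gcd a b := by
      rw [Nat.pos_iff_ne_zero]
      intro h
      rw [Int.gcd_eq_zero_iff] at h
      apply h0
      rw [hv, h.1, h.2]
      simp
    obtain ⟨c, hc⟩ := Int.gcd_dvd_left (a := a) (b := b)
    obtain ⟨d, hd⟩ := Int.gcd_dvd_right (a := a) (b := b)
    set g := Int.gcd a b with hg
    have hgR : (0 : ℝ) < g := by exact_mod_cast hgpos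
    have hg1 : (1 : ℝ) ≤ g := by exact_mod_cast hgpos
    have hcR : (a : ℝ) = g * c := by exact_mod_cast hc
    have hdR : (b : ℝ) = g * d := by exact_mod_cast hd
    -- The quotient of `v` by the gcd of its coordinates is a lattice point of the segment.
    have hmem : (((c : ℝ), (d : ℝ)) : V) ∈ segment ℝ (0 : V) v ∩ latticePts := by
      refine ⟨?_, ⟨(c, d), rfl⟩⟩
      rw [segment_eq_image]
      refine ⟨(g : ℝ)⁻¹, ⟨by positivity, inv_le_one_of_one_le₀ hg1⟩, ?_⟩
      rw [hv, hcR, hdR]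
      ext <;> simp <;> field_simp
    rw [hs] at hmem
    rcases hmem with h | h
    · exfalso
      apply h0
      simp only [Prod.mk_eq_zero] at h
      rw [hv, hcR, hdR, h.1, h.2]
      simp
    · simp only [mem_singleton_iff, hv, Prod.mk.injEq] at h
      obtain ⟨h1, h2⟩ := h
      have hne : a ≠ 0 ∨ b ≠ 0 := by
        by_contra! hh
        apply h0
        rw [hv, hh.1, hh.2]
        simp
      rcases hne with hne | hne
      · have hne' : (a : ℝ) ≠ 0 := by exact_mod_cast hne
        rw [h1] at hcR
        have : (g : ℝ) = 1 := by
          apply mul_right_cancel₀ hne'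
          linarith
        exact_mod_cast this
      · have hne' : (b : ℝ) ≠ 0 := by exact_mod_cast hne
        rw [h2] at hdR
        have : (g : ℝ) = 1 := by
          apply mul_right_cancel₀ hne'
          linarith
        exact_mod_cast this
  · rintro ⟨a, b, rfl, x, y, hxy⟩
    refine ⟨⟨(a, b), rfl⟩, ?_, ?_⟩
    · intro h
      simp only [Prod.mk_eq_zero, Int.cast_eq_zero] at h
      rw [h.1, h.2] at hxy
      simp at hxy
    · apply Set.Subset.antisymm
      · rintro p ⟨hp, ⟨⟨c, d⟩, hcd⟩⟩
        rw [segment_eq_image] at hp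
        obtain ⟨t, ⟨ht0, ht1⟩, rfl⟩ := hp
        simp only [smul_zero, zero_add, Prod.smul_mk, smul_eq_mul, Prod.mk.injEq] at hcd
        obtain ⟨h1, h2⟩ := hcd
        have hxy' : (x : ℝ) * a + y * b = 1 := by exact_mod_cast hxy
        -- A Bézout relation shows that the parameter `t` is itself an integer.
        have ht : t = ((x * c + y * d : ℤ) : ℝ) := by
          push_cast
          rw [← h1, ← h2]
          linear_combination (-t) * hxy'
        rw [ht] at ht0 ht1
        have i0 : 0 ≤ x * c + y * d := by exact_mod_cast ht0
        have i1 : x * c + y * d ≤ 1 := by exact_mod_cast ht1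
        have : x * c + y * d = 0 ∨ x * c + y * d = 1 := by omega
        rcases this with h | h
        · left
          rw [ht, h]
          simp
        · right
          rw [ht, h]
          simp
      · rintro p (rfl | rfl)
        · exact ⟨left_mem_segment ℝ _ _, ⟨(0, 0), by ext <;> simp⟩⟩
        · exact ⟨right_mem_segment ℝ _ _, ⟨(a, b), rfl⟩⟩

lemma dvd_of_coprime_mul {l n a b : ℤ} (h : IsCoprime a b) (ha : l ∣ n * a) (hb : l ∣ n * b) :
    l ∣ n := by
  obtain ⟨x, y, hxy⟩ := h
  have : n = x * (n * a) + y * (n * b) := by linear_combination (-n) * hxy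
  rw [this]
  exact dvd_add (ha.mul_left _) (hb.mul_left _)

/-- Lattice points `u, w` on a line `⟨(p, q), ·⟩ = -l` with primitive normal satisfy
`l ∣ det(u, w)`. -/
lemma dvd_det_of_level {l p q u₁ u₂ w₁ w₂ : ℤ} (h : IsCoprime p q)
    (hu : p * u₁ + q * u₂ = -l) (hw : p * w₁ + q * w₂ = -l) : l ∣ u₁ * w₂ - u₂ * w₁ := by
  apply dvd_of_coprime_mul h
  · exact ⟨u₂ - w₂, by linear_combination w₂ * hu - u₂ * hw⟩
  · exact ⟨w₁ - u₁, by linear_combination u₁ * hw - w₁ * hu⟩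

/-- Divisibility of the determinant by `l` is transitive through a primitive vector `u`, by the
Plücker relation `det(v, w) u = det(u, w) v + det(v, u) w`. -/
lemma dvd_det_trans {l v₁ v₂ u₁ u₂ w₁ w₂ : ℤ} (h : IsCoprime u₁ u₂)
    (hvu : l ∣ v₁ * u₂ - v₂ * u₁) (huw : l ∣ u₁ * w₂ - u₂ * w₁) : l ∣ v₁ * w₂ - v₂ * w₁ := by
  apply dvd_of_coprime_mul h
  · have : (v₁ * w₂ - v₂ * w₁) * u₁
        = (u₁ * w₂ - u₂ * w₁) * v₁ + (v₁ * u₂ - v₂ * u₁) * w₁ := by ring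
    rw [this]
    exact dvd_add (huw.mul_right _) (hvu.mul_right _)
  · have : (v₁ * w₂ - v₂ * w₁) * u₂
        = (u₁ * w₂ - u₂ * w₁) * v₂ + (v₁ * u₂ - v₂ * u₁) * w₂ := by ring
    rw [this]
    exact dvd_add (huw.mul_right _) (hvu.mul_right _)

/-! ### Polygons and their vertices -/

lemma exists_dotV_eq (f : V →ₗ[ℝ] ℝ) : ∃ η : V, ∀ x, f x = dotV η x := by
  refine ⟨(f (1, 0), f (0, 1)), fun x => ?_⟩
  have hx : x = x.1 • ((1, 0) : V) + x.2 • ((0, 1) : V) := by ext <;> simp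
  conv_lhs => rw [hx]
  simp only [map_add, map_smul, smul_eq_mul, dotV]
  ring

lemma isLinearMap_dotV (η : V) : IsLinearMap ℝ (dotV η) :=
  ⟨fun x y => by simp only [dotV, Prod.fst_add, Prod.snd_add]; ring,
    fun c x => by simp only [dotV, Prod.smul_fst, Prod.smul_snd, smul_eq_mul]; ring⟩

lemma IsPolygon.finite_extremePoints {Q : Set V} (h : IsPolygon Q) :
    (extremePoints ℝ Q).Finite := by
  obtain ⟨A, rfl, -⟩ := h
  exact A.finite_toSet.subset extremePoints_convexHull_subset

lemma IsPolygon.convexHull_extremePoints {Q : Set V} (h : IsPolygon Q) :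
    convexHull ℝ (extremePoints ℝ Q) = Q := by
  have hf := h.finite_extremePoints
  obtain ⟨A, hA, -⟩ := h
  have hc : IsCompact Q := hA ▸ A.finite_toSet.isCompact_convexHull ℝ
  have hv : Convex ℝ Q := hA ▸ convex_convexHull ℝ _
  have := closure_convexHull_extremePoints hc hv
  rwa [(hf.isClosed_convexHull ℝ).closure_eq] at this

lemma IsPolygon.le_of_le_extremePoints {Q : Set V} (h : IsPolygon Q) {η : V} {r : ℝ}
    (hr : ∀ w ∈ extremePoints ℝ Q, r ≤ dotV η w) : ∀ z ∈ Q, r ≤ dotV η z := by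
  intro z hz
  rw [← h.convexHull_extremePoints] at hz
  exact convexHull_min (t := {w | r ≤ dotV η w}) hr
    (convex_halfSpace_ge (isLinearMap_dotV η) r) hz

/-- Every functional attains its minimum over a polygon at a vertex. -/
lemma IsPolygon.exists_min_vertex {Q : Set V} (h : IsPolygon Q) (hne : Q.Nonempty) (η : V) :
    ∃ w ∈ extremePoints ℝ Q, ∀ z ∈ Q, dotV η w ≤ dotV η z := by
  have hE : (extremePoints ℝ Q).Nonempty := by
    rw [← convexHull_nonempty_iff (𝕜 := ℝ), h.convexHull_extremePoints]
    exact hne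
  obtain ⟨w, hw, hmin⟩ := Set.exists_min_image _ (dotV η) h.finite_extremePoints hE
  exact ⟨w, hw, h.le_of_le_extremePoints hmin⟩

/-- Every vertex of a polygon around the origin minimises some nonzero functional. -/
lemma IsPolygon.exists_support {Q : Set V} (h : IsPolygon Q) (h0 : (0 : V) ∈ Q) {v : V}
    (hv : v ∈ extremePoints ℝ Q) (hv0 : v ≠ 0) :
    ∃ η : V, η ≠ 0 ∧ ∀ z ∈ Q, dotV η v ≤ dotV η z := by
  have hconv : Convex ℝ Q := h.convexHull_extremePoints ▸ convex_convexHull ℝ _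
  have hsub : convexHull ℝ (extremePoints ℝ Q \ {v}) ⊆ Q \ {v} :=
    convexHull_min (sdiff_subset_sdiff_left extremePoints_subset)
      ((hconv.mem_extremePoints_iff_convex_sdiff).1 hv).2
  obtain ⟨f, u, hfv, hfb⟩ := geometric_hahn_banach_point_closed
    (convex_convexHull ℝ (extremePoints ℝ Q \ {v}))
    ((h.finite_extremePoints.subset sdiff_subset).isClosed_convexHull ℝ)
    (fun hh => (hsub hh).2 rfl)
  obtain ⟨η, hη⟩ := exists_dotV_eq (f : V →ₗ[ℝ] ℝ)
  simp only [ContinuousLinearMap.coe_coe] at hη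
  have hb : ∀ w ∈ extremePoints ℝ Q, w ≠ v → dotV η v < dotV η w := by
    intro w hw hwv
    have := hfb w (subset_convexHull ℝ _ ⟨hw, hwv⟩)
    rw [← hη, ← hη]
    linarith
  refine ⟨η, ?_, h.le_of_le_extremePoints fun w hw => ?_⟩
  · -- If `v` were the only vertex then `Q = {v}`, which misses the origin.
    rintro rfl
    have hE : extremePoints ℝ Q ⊆ {v} := by
      intro w hw
      by_contra hwv
      have := hb w hw hwv
      simp [dotV] at this
    have := convexHull_mono (𝕜 := ℝ) hE
    rw [h.convexHull_extremePoints, convexHull_singleton] at this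
    exact hv0 (this h0).symm
  · rcases eq_or_ne w v with rfl | hwv
    · exact le_rfl
    · exact (hb w hw hwv).le

/-! ### The common sublattice -/

/-- The vectors `u, w` are lattice vectors with `ℓ ∣ det(u, w)`. For primitive `u` this says that
`w` is congruent modulo `ℓ` to a multiple of `u`. -/
def DetRel (ℓ : ℕ) (u w : V) : Prop :=
  ∃ a b c d : ℤ, u = ((a : ℝ), (b : ℝ)) ∧ w = ((c : ℝ), (d : ℝ)) ∧ (ℓ : ℤ) ∣ a * d - b * c

/-- Two vertices minimising the same nonzero functional are related: they coincide or span an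
edge. -/
lemma detRel_of_common_min {ℓ : ℕ} {Q : Set V} (hQ : IsLReflexive ℓ Q) {η u w : V} (hη : η ≠ 0)
    (hu : u ∈ extremePoints ℝ Q) (hw : w ∈ extremePoints ℝ Q)
    (hmu : ∀ z ∈ Q, dotV η u ≤ dotV η z) (hmw : ∀ z ∈ Q, dotV η w ≤ dotV η z) :
    DetRel ℓ u w := by
  obtain ⟨a, b, hu', -⟩ := (isPrimitive_iff u).1 (hQ.vertices_primitive u hu)
  obtain ⟨c, d, hw', -⟩ := (isPrimitive_iff w).1 (hQ.vertices_primitive w hw)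
  refine ⟨a, b, c, d, hu', hw', ?_⟩
  by_cases huw : u = w
  · rw [hu', hw', Prod.mk.injEq] at huw
    have h1 : a = c := by exact_mod_cast huw.1
    have h2 : b = d := by exact_mod_cast huw.2
    exact ⟨0, by rw [h1, h2]; ring⟩
  · obtain ⟨μ, hμ, hsub⟩ := hQ.edge_cond {y ∈ Q | ∀ z ∈ Q, dotV η y ≤ dotV η z}
      ⟨⟨η, hη, rfl⟩, u, ⟨hu.1, hmu⟩, w, ⟨hw.1, hmw⟩, huw⟩
    obtain ⟨p, q, rfl, hpq⟩ := (isPrimitive_iff μ).1 hμ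
    have h1 : dotV _ u = _ := hsub ⟨hu.1, hmu⟩
    have h2 : dotV _ w = _ := hsub ⟨hw.1, hmw⟩
    rw [hu'] at h1
    rw [hw'] at h2
    simp only [dotV] at h1 h2
    exact dvd_det_of_level hpq (by exact_mod_cast h1) (by exact_mod_cast h2)

lemma isClosed_min_set (Q : Set V) (w : V) :
    IsClosed {η : V | ∀ z ∈ Q, dotV η w ≤ dotV η z} := by
  have : {η : V | ∀ z ∈ Q, dotV η w ≤ dotV η z}
      = ⋂ z ∈ Q, {η : V | dotV η w ≤ dotV η z} := by
    ext
    simp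
  rw [this]
  refine isClosed_biInter fun z _ => isClosed_le ?_ ?_ <;> (unfold dotV; fun_prop)

/-- Any two vertices of an `ℓ`-reflexive polygon have determinant divisible by `ℓ`. -/
lemma vertices_related {ℓ : ℕ} {Q : Set V} (hQ : IsLReflexive ℓ Q) {v w : V}
    (hv : v ∈ extremePoints ℝ Q) (hw : w ∈ extremePoints ℝ Q) : DetRel ℓ v w := by
  by_contra hvw
  have h0 : (0 : V) ∈ Q := interior_subset hQ.zero_mem_interior
  have hfin := hQ.polygon.finite_extremePoints
  -- The two colour classes of functionals.
  set C : Set V := ⋃ u ∈ {u ∈ extremePoints ℝ Q | DetRel ℓ v u},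
    {η : V | ∀ z ∈ Q, dotV η u ≤ dotV η z} with hC
  set D : Set V := ⋃ u ∈ {u ∈ extremePoints ℝ Q | ¬ DetRel ℓ v u},
    {η : V | ∀ z ∈ Q, dotV η u ≤ dotV η z} with hD
  have hCc : IsClosed C :=
    (hfin.subset (sep_subset _ _)).isClosed_biUnion fun u _ => isClosed_min_set Q u
  have hDc : IsClosed D :=
    (hfin.subset (sep_subset _ _)).isClosed_biUnion fun u _ => isClosed_min_set Q u
  have hconn : IsPreconnected ({0}ᶜ : Set V) := by
    refine (isConnected_compl_singleton_of_one_lt_rank ?_ 0).isPreconnected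
    simp only [rank_prod', Module.rank_self]
    norm_num
  have hcover : ({0}ᶜ : Set V) ⊆ C ∪ D := by
    intro η _
    obtain ⟨u, hu, hmin⟩ := hQ.polygon.exists_min_vertex ⟨0, h0⟩ η
    by_cases h : DetRel ℓ v u
    · exact Or.inl (mem_biUnion (x := u) ⟨hu, h⟩ hmin)
    · exact Or.inr (mem_biUnion (x := u) ⟨hu, h⟩ hmin)
  obtain ⟨η₁, hη₁, hm₁⟩ :=
    hQ.polygon.exists_support h0 hv (hQ.vertices_primitive v hv).2.1
  obtain ⟨η₂, hη₂, hm₂⟩ :=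
    hQ.polygon.exists_support h0 hw (hQ.vertices_primitive w hw).2.1
  have hvv : DetRel ℓ v v := detRel_of_common_min hQ hη₁ hv hv hm₁ hm₁
  obtain ⟨η, hη, hηC, hηD⟩ := isPreconnected_closed_iff.1 hconn C D hCc hDc hcover
    ⟨η₁, hη₁, mem_biUnion (x := v) ⟨hv, hvv⟩ hm₁⟩ ⟨η₂, hη₂, mem_biUnion (x := w) ⟨hw, hvw⟩ hm₂⟩
  simp only [hC, hD, mem_iUnion, exists_prop] at hηC hηD
  obtain ⟨x, ⟨hx, hvx⟩, hmx⟩ := hηC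
  obtain ⟨y, ⟨hy, hvy⟩, hmy⟩ := hηD
  have hxy := detRel_of_common_min hQ hη hx hy hmx hmy
  obtain ⟨p, q, hx', hpq⟩ := (isPrimitive_iff x).1 (hQ.vertices_primitive x hx)
  apply hvy
  obtain ⟨a, b, c, d, e1, e2, e3⟩ := hvx
  obtain ⟨a', b', c', d', e1', e2', e3'⟩ := hxy
  refine ⟨a, b, c', d', e1, e2', ?_⟩
  rw [hx', Prod.mk.injEq] at e2 e1'
  have i1 : p = c := by exact_mod_cast e2.1
  have i2 : q = d := by exact_mod_cast e2.2
  have i3 : p = a' := by exact_mod_cast e1'.1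
  have i4 : q = b' := by exact_mod_cast e1'.2
  subst i1 i2 i3 i4
  exact dvd_det_trans hpq e3 e3'

/-! ### The change of lattice -/

/-- The linear automorphism `U ∘ A_{ℓ,1}` of `ℝ²`, where `U` has columns `(m, n)` and `(a, b)` and
determinant `1`, so that `U ∘ A_{ℓ,1}` maps `ℤ²` onto `{w ∈ ℤ² : ℓ ∣ det((a, b), w)}`. -/
def latticeEquiv (ℓ : ℕ) (hℓ : ℓ ≠ 0) (m n a b : ℤ) (hdet : m * b - a * n = 1) : V ≃ₗ[ℝ] V where
  toFun x := ((m : ℝ) * (ℓ * x.1) + a * (x.1 + x.2), (n : ℝ) * (ℓ * x.1) + b * (x.1 + x.2))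
  invFun y := ((b * y.1 - a * y.2) / ℓ, (m * y.2 - n * y.1) - (b * y.1 - a * y.2) / ℓ)
  map_add' x y := by ext <;> simp <;> ring
  map_smul' c x := by ext <;> simp <;> ring
  left_inv x := by
    have h : (m : ℝ) * b - a * n = 1 := by exact_mod_cast hdet
    have hl : (ℓ : ℝ) ≠ 0 := by exact_mod_cast hℓ
    ext
    · simp only
      field_simp
      linear_combination ℓ * x.1 * h
    · simp only
      field_simp
      linear_combination ℓ * x.2 * h
  right_inv y := by
    have h : (m : ℝ) * b - a * n = 1 := by exact_mod_cast hdet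
    have hl : (ℓ : ℝ) ≠ 0 := by exact_mod_cast hℓ
    ext
    · simp only
      field_simp
      linear_combination ℓ * y.1 * h
    · simp only
      field_simp
      linear_combination ℓ * y.2 * h

lemma IsPolygon.image {Q : Set V} (h : IsPolygon Q) (e : V ≃ₗ[ℝ] V) : IsPolygon (e '' Q) := by
  classical
  obtain ⟨A, rfl, hA⟩ := h
  refine ⟨A.image e, ?_, ?_⟩
  · rw [Finset.coe_image]
    exact LinearMap.image_convexHull (e : V →ₗ[ℝ] V) _
  · rw [Finset.coe_image]
    exact AffineMap.span_eq_top_of_surjective (e : V →ₗ[ℝ] V).toAffineMap e.surjective hA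

/-- Linear automorphisms of the plane map edges to edges. -/
lemma IsEdge.image {P F : Set V} (h : IsEdge P F) (e : V ≃ₗ[ℝ] V) :
    IsEdge (e '' P) (e '' F) := by
  obtain ⟨⟨η, hη, rfl⟩, y₁, h₁, y₂, h₂, hne⟩ := h
  obtain ⟨μ, hμ⟩ := exists_dotV_eq ((isLinearMap_dotV η).mk' _ ∘ₗ (e.symm : V →ₗ[ℝ] V))
  have hμ' : ∀ x, dotV μ (e x) = dotV η x := by
    intro x
    rw [← hμ]
    simp
  refine ⟨⟨μ, ?_, ?_⟩, e y₁, mem_image_of_mem _ h₁, e y₂, mem_image_of_mem _ h₂,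
    fun h => hne (e.injective h)⟩
  · rintro rfl
    apply hη
    have e1 := hμ' (1, 0)
    have e2 := hμ' (0, 1)
    simp only [dotV, Prod.fst_zero, Prod.snd_zero, zero_mul, add_zero, mul_one, mul_zero,
      zero_add] at e1 e2
    exact Prod.ext e1.symm e2.symm
  · ext y
    constructor
    · rintro ⟨x, ⟨hx, hmin⟩, rfl⟩
      refine ⟨mem_image_of_mem _ hx, ?_⟩
      rintro _ ⟨z, hz, rfl⟩
      rw [hμ', hμ']
      exact hmin z hz
    · rintro ⟨⟨x, hx, rfl⟩, hmin⟩
      refine ⟨x, ⟨hx, fun z hz => ?_⟩, rfl⟩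
      have := hmin _ (mem_image_of_mem e hz)
      rwa [hμ', hμ'] at this

lemma latticeEquiv_eq_comp (ℓ : ℕ) (hℓ : ℓ ≠ 0) (m n a b : ℤ) (hdet : m * b - a * n = 1) :
    ⇑(latticeEquiv ℓ hℓ m n a b hdet) = mapGL !![m, a; n, b] ∘ mapA ℓ 1 := by
  funext x
  simp [latticeEquiv, mapGL, mapA]

/-- A primitive vector `w` with `ℓ ∣ det((a, b), w)` is primitive in the new lattice. -/
lemma latticeEquiv_symm_primitive {ℓ : ℕ} (hℓ : ℓ ≠ 0) {m n a b : ℤ} (hdet : m * b - a * n = 1)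
    {c d : ℤ} (hcd : IsCoprime c d) (hdvd : (ℓ : ℤ) ∣ a * d - b * c) :
    ∃ x y : ℤ, (latticeEquiv ℓ hℓ m n a b hdet).symm ((c : ℝ), (d : ℝ)) = ((x : ℝ), (y : ℝ)) ∧
      IsCoprime x y := by
  obtain ⟨k, hk⟩ := hdvd
  have hl : (ℓ : ℝ) ≠ 0 := by exact_mod_cast hℓ
  refine ⟨-k, m * d - n * c + k, ?_, ?_⟩
  · have hk' : (b : ℝ) * c - a * d = ℓ * (-k) := by
      have : (a : ℝ) * d - b * c = ℓ * k := by exact_mod_cast hk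
      linear_combination -this
    have hk2 : ((b : ℝ) * c - a * d) / ℓ = -k := by
      rw [hk']
      field_simp
    change ((((b : ℝ) * c - a * d) / ℓ, (m * d - n * c) - (b * c - a * d) / ℓ) : V) = _
    rw [hk2]
    push_cast
    ext <;> simp
  · obtain ⟨s, t, hst⟩ := hcd
    refine ⟨s * (m * ℓ + a) + t * (n * ℓ + b), s * a + t * b, ?_⟩
    linear_combination hst + (s * c + t * d) * hdet + (s * m + t * n) * hk

/-- **Reduction of ℓ-reflexive polygons to reflexive polygons.** -/
theorem reduction_to_reflexive (ℓ : ℕ) (hℓ : 1 < ℓ) (Q : Set V) (hQ : IsLReflexive ℓ Q) :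
    ∃ k : ℕ, 1 ≤ k ∧ k ≤ ℓ - 1 ∧ Nat.gcd k ℓ = 1 ∧
      ∃ P : Set V, IsLReflexive 1 P ∧
        ∃ U : Matrix (Fin 2) (Fin 2) ℤ, (U.det = 1 ∨ U.det = -1) ∧
          Q = (mapGL U ∘ mapA ℓ k) '' P := by
  have hl0 : ℓ ≠ 0 := by omega
  have h0 : (0 : V) ∈ Q := interior_subset hQ.zero_mem_interior
  obtain ⟨v, hv, -⟩ := hQ.polygon.exists_min_vertex ⟨0, h0⟩ 0
  obtain ⟨a, b, hvab, s, t, hst⟩ := (isPrimitive_iff v).1 (hQ.vertices_primitive v hv)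
  have hdet : t * b - a * (-s) = 1 := by linear_combination hst
  set e := latticeEquiv ℓ hl0 t (-s) a b hdet with he
  have hvert : ∀ w ∈ extremePoints ℝ Q, ∃ c d : ℤ, w = ((c : ℝ), (d : ℝ)) ∧ IsCoprime c d ∧
      (ℓ : ℤ) ∣ a * d - b * c := by
    intro w hw
    obtain ⟨c, d, hwcd, hcd⟩ := (isPrimitive_iff w).1 (hQ.vertices_primitive w hw)
    refine ⟨c, d, hwcd, hcd, ?_⟩
    obtain ⟨a', b', c', d', e1, e2, e3⟩ := vertices_related hQ hv hw
    rw [hvab, Prod.mk.injEq] at e1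
    rw [hwcd, Prod.mk.injEq] at e2
    have i1 : a = a' := by exact_mod_cast e1.1
    have i2 : b = b' := by exact_mod_cast e1.2
    have i3 : c = c' := by exact_mod_cast e2.1
    have i4 : d = d' := by exact_mod_cast e2.2
    rwa [i1, i2, i3, i4]
  have hQe : e '' (e.symm '' Q) = Q := by
    rw [← image_comp]
    simp
  refine ⟨1, le_rfl, by omega, by simp, e.symm '' Q, ?_, !![t, a; -s, b], ?_, ?_⟩
  · refine ⟨hQ.polygon.image e.symm, ?_, ?_, ?_⟩
    · intro x hx
      rw [← image_extremePoints] at hx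
      obtain ⟨w, hw, rfl⟩ := hx
      obtain ⟨c, d, rfl, hcd, hdvd⟩ := hvert w hw
      exact (isPrimitive_iff _).2 (latticeEquiv_symm_primitive hl0 hdet hcd hdvd)
    · have := (e.symm.toContinuousLinearEquiv.toHomeomorph).image_interior Q
      change e.symm '' interior Q = interior (e.symm '' Q) at this
      rw [← this]
      exact ⟨0, hQ.zero_mem_interior, map_zero _⟩
    · intro F hF
      have hFe := hF.image e
      rw [hQe] at hFe
      obtain ⟨μ, hμ, hsub⟩ := hQ.edge_cond _ hFe
      obtain ⟨p, q, rfl, hpq⟩ := (isPrimitive_iff μ).1 hμ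
      obtain ⟨⟨ν, -, hν⟩, y, hy, -⟩ := hFe
      obtain ⟨w, hw, hmin⟩ := hQ.polygon.exists_min_vertex ⟨0, h0⟩ ν
      have hwF : w ∈ e '' F := by
        rw [hν]
        exact ⟨hw.1, hmin⟩
      have hwl : dotV _ w = _ := hsub hwF
      obtain ⟨c, d, rfl, hcd, hdvd⟩ := hvert w hw
      simp only [dotV] at hwl
      have hwl' : p * c + q * d = -(ℓ : ℤ) := by exact_mod_cast hwl
      -- Modulo `ℓ` the vector `v` is a multiple of `w`, so `⟨(p, q), v⟩` is divisible by `ℓ`.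
      have hdv : (ℓ : ℤ) ∣ p * a + q * b := by
        obtain ⟨k, hk⟩ := hdvd
        apply dvd_of_coprime_mul hcd
        · exact ⟨-a - q * k, by linear_combination a * hwl' - q * hk⟩
        · exact ⟨-b + p * k, by linear_combination b * hwl' + p * hk⟩
      obtain ⟨r, hr⟩ := hdv
      have key : ∀ x : V, dotV ((p : ℝ), (q : ℝ)) (e x)
          = ℓ * dotV (((t * p - s * q + r : ℤ) : ℝ), ((r : ℤ) : ℝ)) x := by
        intro x
        have hr' : (p : ℝ) * a + q * b = ℓ * r := by exact_mod_cast hr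
        simp only [he, latticeEquiv, dotV, LinearEquiv.coe_mk, LinearMap.coe_mk, AddHom.coe_mk]
        push_cast
        linear_combination (x.1 + x.2) * hr'
      have hl : (ℓ : ℝ) ≠ 0 := by exact_mod_cast hl0
      have hlevel : ∀ x ∈ F, dotV (((t * p - s * q + r : ℤ) : ℝ), ((r : ℤ) : ℝ)) x = -1 := by
        intro x hx
        have h1 : dotV _ (e x) = _ := hsub (mem_image_of_mem e hx)
        rw [key] at h1
        apply mul_left_cancel₀ hl
        linarith
      refine ⟨_, (isPrimitive_iff _).2 ⟨t * p - s * q + r, r, rfl, ?_⟩, ?_⟩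
      · obtain ⟨x, y, hxy, -⟩ := latticeEquiv_symm_primitive hl0 hdet hcd hdvd
        obtain ⟨x', hx', hxe⟩ := hwF
        have hxx : x' = ((x : ℝ), (y : ℝ)) := by
          rw [← hxy, ← hxe]
          exact (e.symm_apply_apply x').symm
        have := hlevel x' hx'
        rw [hxx] at this
        simp only [dotV] at this
        have h2 : (t * p - s * q + r) * x + r * y = -1 := by exact_mod_cast this
        exact ⟨-x, -y, by linear_combination -h2⟩
      · intro x hx
        simpa using hlevel x hx
  · left
    rw [Matrix.det_fin_two_of]
    exact hdet
  · rw [← latticeEquiv_eq_comp ℓ hl0 t (-s) a b hdet]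
    exact hQe.symm
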